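/- Let Λ be a τ-stable lattice with Λ = Λ^∨. Then every D ∈ ℳ(𝔽) with D ⊆ Λ satisfies D ⊂¹ Λ, and the assignment D ↦ D/pΛ is a bijection from the set {D ∈ ℳ(𝔽) : D ⊆ Λ} onto the set of 𝔽-subspaces U ⊆ V(Λ) with dim U = 3, U^⊥ ⊆ U, dim U/(U ∩ σ̄U) ≤ 1, and U^⊥ ⊆ U ∩ σ̄U. -/

import Mathlib

open Pointwise

noncomputable section

variable (p : ℕ) [Fact p.Prime] (𝔽 : Type) [Field 𝔽] [IsAlgClosed 𝔽] [CharP 𝔽 p]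

/-- The Witt ring `W(𝔽)`. -/
abbrev Wp := WittVector p 𝔽

/-- The fraction field `K` of `W(𝔽)`. -/
abbrev Kp := FractionRing (Wp p 𝔽)

/-- `N₀ = K⁴`. -/
abbrev N0 := Fin 4 → Kp p 𝔽

/-- The symplectic form on `N₀`. -/
def omegaForm (x y : N0 p 𝔽) : Kp p 𝔽 :=
  x 0 * y 3 - x 3 * y 0 + x 1 * y 2 - x 2 * y 1

/-- The dual lattice of a `W`-submodule of `N₀`. -/
def dualL (D : Submodule (Wp p 𝔽) (N0 p 𝔽)) : Submodule (Wp p 𝔽) (N0 p 𝔽) where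
  carrier := {x | ∀ d ∈ D, omegaForm p 𝔽 x d ∈ (algebraMap (Wp p 𝔽) (Kp p 𝔽)).range}
  zero_mem' := by
    intro d hd
    have : omegaForm p 𝔽 0 d = 0 := by simp [omegaForm]
    rw [this]; exact zero_mem _
  add_mem' := by
    intro x y hx hy d hd
    have : omegaForm p 𝔽 (x + y) d = omegaForm p 𝔽 x d + omegaForm p 𝔽 y d := by
      simp [omegaForm]; ring
    rw [this]; exact add_mem (hx d hd) (hy d hd)
  smul_mem' := by
    intro c x hx d hd
    have : omegaForm p 𝔽 (c • x) d
        = algebraMap (Wp p 𝔽) (Kp p 𝔽) c * omegaForm p 𝔽 x d := by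
      simp [omegaForm, Algebra.smul_def]; ring
    rw [this]; exact mul_mem ⟨c, rfl⟩ (hx d hd)

variable (σ : Kp p 𝔽 ≃+* Kp p 𝔽)

/-- The semilinear map `τ` on `N₀`, applying `σ` to each coordinate. -/
def tauFun (x : N0 p 𝔽) : N0 p 𝔽 := fun i => σ (x i)

/-- The lattice `τD` generated by the image of `D` under `τ`. -/
def tauL (D : Submodule (Wp p 𝔽) (N0 p 𝔽)) : Submodule (Wp p 𝔽) (N0 p 𝔽) :=
  Submodule.span (Wp p 𝔽) (tauFun p 𝔽 σ '' D)

/-- `D` is a lattice in `N₀`: finitely generated over `W` and spanning `N₀` over `K`. -/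
def IsLattice (D : Submodule (Wp p 𝔽) (N0 p 𝔽)) : Prop :=
  D.FG ∧ Submodule.span (Kp p 𝔽) (D : Set (N0 p 𝔽)) = ⊤

/-- The length of the `W`-module `B / A` (as the Krull dimension of its submodule
lattice). -/
def relLength (A B : Submodule (Wp p 𝔽) (N0 p 𝔽)) : WithBot ℕ∞ :=
  Order.krullDim (Submodule (Wp p 𝔽) (B ⧸ (A.comap B.subtype)))

/-- `A ⊂ᵈ B` : `A ⊆ B` with colength `d`. -/
def SubD (d : ℕ) (A B : Submodule (Wp p 𝔽) (N0 p 𝔽)) : Prop :=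
  A ≤ B ∧ relLength p 𝔽 A B = (d : WithBot ℕ∞)

/-- Membership in `ℳ(𝔽)`. -/
def memM (D : Submodule (Wp p 𝔽) (N0 p 𝔽)) : Prop :=
  IsLattice p 𝔽 D ∧
  SubD p 𝔽 2 ((p : Wp p 𝔽) • dualL p 𝔽 D) D ∧
  SubD p 𝔽 2 D (dualL p 𝔽 D) ∧
  SubD p 𝔽 2 ((p : Wp p 𝔽) • dualL p 𝔽 D) (tauL p 𝔽 σ D) ∧
  SubD p 𝔽 2 (tauL p 𝔽 σ D) (dualL p 𝔽 D) ∧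
  relLength p 𝔽 D (D ⊔ tauL p 𝔽 σ D) ≤ 1

/-- `σ` is the automorphism of `K` induced by the Witt-vector Frobenius. -/
def IsWittFrobenius : Prop :=
  ∀ w : Wp p 𝔽, σ (algebraMap (Wp p 𝔽) (Kp p 𝔽) w)
    = algebraMap (Wp p 𝔽) (Kp p 𝔽) (WittVector.frobeniusEquiv p 𝔽 w)

/-! Let `D ≤ Λ = Λ^∨`. Duality gives `Λ ≤ D^∨` and `length (D^∨/Λ) = length (Λ/D)`, so
`length (D^∨/D) = 2` forces `length (Λ/D) = 1`, and the chain `pΛ ≤ pD^∨ ≤ D` then yields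
`length (D/pΛ) = 3`. Conversely, `length (X/pX) = 4` for every lattice `X`, so that a `U` of
length 3 over `pΛ` has colength 1 in `Λ`; the same holds for `τU`, as `τΛ = Λ`. Comparing with
`pU^∨ ≤ U, τU ≤ Λ ≤ U^∨` determines all the lengths in the definition of `ℳ(𝔽)`. The two bounds by
`1` agree because `(D + τD)/D ≃ τD/(D ∩ τD)` and `D`, `τD` have the same length over `pD^∨`. -/

section Colength

variable {R S M N : Type*} [Ring R] [Ring S] [AddCommGroup M] [Module R M]
  [AddCommGroup N] [Module S N]

/-- The length of `B / A`. It is meant for `A ≤ B`; in general it is the length of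
`B / (A ⊓ B)`. -/
def colength (A B : Submodule R M) : ℕ∞ :=
  Module.length R (B ⧸ A.comap B.subtype)

/-- The submodules of `B / A` are the submodules between `A` and `B`. -/
def quotientOrderIsoIcc {A B : Submodule R M} (h : A ≤ B) :
    Submodule R (B ⧸ A.comap B.subtype) ≃o Set.Icc A B where
  toFun Q := ⟨(Q.comap (A.comap B.subtype).mkQ).map B.subtype, by
    refine ⟨fun x hx ↦ ⟨⟨x, h hx⟩, ?_, rfl⟩, Submodule.map_subtype_le _ _⟩
    exact Submodule.le_comap_mkQ (A.comap B.subtype) Q hx⟩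
  invFun C := (C.1.comap B.subtype).map (A.comap B.subtype).mkQ
  left_inv Q := by
    simp only [Submodule.comap_map_eq_of_injective B.injective_subtype]
    exact Submodule.map_comap_eq_of_surjective (Submodule.mkQ_surjective _) _
  right_inv C := by
    ext1
    simp only [Submodule.comap_map_mkQ]
    rw [sup_eq_right.2 (Submodule.comap_mono C.2.1), Submodule.map_comap_subtype,
      inf_eq_right.2 C.2.2]
  map_rel_iff' :=
    (Submodule.map_le_map_iff_of_injective B.injective_subtype _ _).trans
      (Submodule.comap_le_comap_iff_of_surjective (Submodule.mkQ_surjective _))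

lemma coe_colength {A B : Submodule R M} (h : A ≤ B) :
    (colength A B : WithBot ℕ∞) = Order.krullDim (Set.Icc A B) := by
  rw [colength, Module.coe_length, Order.krullDim_eq_of_orderIso (quotientOrderIsoIcc h)]

lemma colength_add_colength {A B C : Submodule R M} (hAB : A ≤ B) (hBC : B ≤ C) :
    colength A B + colength B C = colength A C := by
  have hcomap : A.comap B.subtype = (A.comap C.subtype).comap (Submodule.inclusion hBC) := rfl
  let f : B ⧸ A.comap B.subtype →ₗ[R] C ⧸ A.comap C.subtype :=
    Submodule.mapQ _ _ (Submodule.inclusion hBC) hcomap.le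
  let g : C ⧸ A.comap C.subtype →ₗ[R] C ⧸ B.comap C.subtype :=
    Submodule.factor (Submodule.comap_mono hAB)
  have hf : Function.Injective f := by
    simp only [f, ← LinearMap.ker_eq_bot, Submodule.ker_mapQ, ← hcomap, Submodule.mkQ_map_self]
  have hfg : Function.Exact f g := by
    rw [LinearMap.exact_iff, Submodule.ker_mapQ, Submodule.range_mapQ,
      Submodule.range_inclusion, Submodule.comap_id]
  exact (Module.length_eq_add_of_exact f g hf (Submodule.factor_surjective _) hfg).symm

lemma colength_sup_eq_colength_inf (A B : Submodule R M) :
    colength A (A ⊔ B) = colength (A ⊓ B) B := by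
  rw [colength, colength, sup_comm, inf_comm, Submodule.comap_inf]
  exact (LinearMap.quotientInfEquivSupQuotient B A).length_eq.symm

lemma colength_map_of_injective [Module R N] {f : M →ₗ[R] N} (hf : Function.Injective f)
    (A B : Submodule R M) : colength (A.map f) (B.map f) = colength A B := by
  refine (LinearEquiv.length_eq
    (Submodule.Quotient.equiv _ _ (Submodule.equivMapOfInjective f hf B) ?_)).symm
  rw [Submodule.map_equiv_eq_comap_symm]
  ext y
  obtain ⟨x, rfl⟩ := (Submodule.equivMapOfInjective f hf B).surjective y
  simp [hf.eq_iff]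

lemma colength_le_of_strictMonoOn {f : Submodule R M → Submodule S N} {A B : Submodule R M}
    (hf : StrictMonoOn f (Set.Icc A B)) (h : A ≤ B) :
    colength A B ≤ colength (f A) (f B) := by
  have hA := Set.left_mem_Icc.2 h
  have hB := Set.right_mem_Icc.2 h
  have hmono := hf.monotoneOn
  rw [← WithBot.coe_le_coe, coe_colength h, coe_colength (hmono hA hB h)]
  exact Order.krullDim_le_of_strictMono
    (fun C ↦ ⟨f C, hmono hA C.2 C.2.1, hmono C.2 hB C.2.2⟩) fun C D hCD ↦ hf C.2 D.2 hCD

lemma colength_le_of_strictAntiOn {f : Submodule R M → Submodule S N} {A B : Submodule R M}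
    (hf : StrictAntiOn f (Set.Icc A B)) (h : A ≤ B) :
    colength A B ≤ colength (f B) (f A) := by
  have hA := Set.left_mem_Icc.2 h
  have hB := Set.right_mem_Icc.2 h
  have hanti := hf.antitoneOn
  rw [← WithBot.coe_le_coe, coe_colength h, coe_colength (hanti hA hB h),
    ← Order.krullDim_orderDual (α := Set.Icc (f B) (f A))]
  exact Order.krullDim_le_of_strictMono
    (fun C ↦ OrderDual.toDual ⟨f C, hanti C.2 hB C.2.2, hanti hA C.2 C.2.1⟩)
    fun C D hCD ↦ hf C.2 D.2 hCD

lemma colength_orderIso (e : Submodule R M ≃o Submodule S N) {A B : Submodule R M}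
    (h : A ≤ B) : colength (e A) (e B) = colength A B := by
  refine le_antisymm ?_ (colength_le_of_strictMonoOn (e.strictMono.strictMonoOn _) h)
  simpa using colength_le_of_strictMonoOn (e.symm.strictMono.strictMonoOn _) (e.monotone h)

lemma colength_smul {R M : Type*} [CommRing R] [IsDomain R] [AddCommGroup M] [Module R M]
    [Module.IsTorsionFree R M] {a : R} (ha : a ≠ 0) (A B : Submodule R M) :
    colength (a • A) (a • B) = colength A B :=
  colength_map_of_injective (f := LinearMap.lsmul R M a) (smul_right_injective M ha) A B

/-- The relation `A ⊂ⁿ B`: `A` is contained in `B` with colength `n`. -/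
def HasColength (n : ℕ) (A B : Submodule R M) : Prop :=
  A ≤ B ∧ colength A B = n

namespace HasColength

variable {m n : ℕ} {A B C : Submodule R M}

lemma trans (hAB : HasColength m A B) (hBC : HasColength n B C) : HasColength (m + n) A C :=
  ⟨hAB.1.trans hBC.1, by
    rw [← colength_add_colength hAB.1 hBC.1, hAB.2, hBC.2, Nat.cast_add]⟩

lemma of_trans_left (hAC : HasColength (m + n) A C) (hBC : HasColength n B C) (hAB : A ≤ B) :
    HasColength m A B := by
  have h := hAC.2
  rw [← colength_add_colength hAB hBC.1, hBC.2] at h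
  exact ⟨hAB, by simpa using h⟩

lemma of_trans_right (hAC : HasColength (m + n) A C) (hAB : HasColength m A B) (hBC : B ≤ C) :
    HasColength n B C := by
  have h := hAC.2
  rw [← colength_add_colength hAB.1 hBC, hAB.2] at h
  exact ⟨hBC, by simpa using h⟩

lemma orderIso (hAB : HasColength n A B) (e : Submodule R M ≃o Submodule S N) :
    HasColength n (e A) (e B) :=
  ⟨e.monotone hAB.1, (colength_orderIso e hAB.1).trans hAB.2⟩

lemma smul {R M : Type*} [CommRing R] [IsDomain R] [AddCommGroup M] [Module R M]
    [Module.IsTorsionFree R M] {A B : Submodule R M} (hAB : HasColength n A B) {a : R}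
    (ha : a ≠ 0) : HasColength n (a • A) (a • B) :=
  ⟨smul_mono_right a hAB.1, (colength_smul ha A B).trans hAB.2⟩

lemma colength_sup_eq_colength_inf (hAB : HasColength n A B) (hAC : HasColength n A C) :
    colength B (B ⊔ C) = colength (B ⊓ C) B := by
  have hA : A ≤ B ⊓ C := le_inf hAB.1 hAC.1
  have h : colength A (B ⊓ C) + colength (B ⊓ C) C = colength A (B ⊓ C) + colength (B ⊓ C) B := by
    rw [colength_add_colength hA inf_le_right, colength_add_colength hA inf_le_left, hAB.2, hAC.2]
  have h_ne_top : colength A (B ⊓ C) ≠ ⊤ := by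
    refine ne_top_of_le_ne_top (ENat.natCast_ne_top n) ?_
    rw [← hAB.2, ← colength_add_colength hA inf_le_left]
    exact le_self_add
  rw [_root_.colength_sup_eq_colength_inf, WithTop.add_left_cancel h_ne_top h]

end HasColength

end Colength

lemma length_quotient_smul_top {R M : Type*} [CommRing R] [AddCommGroup M] [Module R M]
    [Module.Free R M] [Module.Finite R M] (I : Ideal R) [I.IsMaximal] :
    Module.length R (M ⧸ (I • ⊤ : Submodule R M)) = Module.finrank R M := by
  let := Ideal.Quotient.field I
  have hsurj : Function.Surjective (algebraMap R (R ⧸ I)) := Ideal.Quotient.mk_surjective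
  have : Nontrivial R := hsurj.nontrivial
  rw [← (TensorProduct.quotTensorEquivQuotSMul M I).length_eq,
    Module.length_eq_of_surjective hsurj, Module.length_eq_finrank, Module.finrank_baseChange]

open LinearMap (BilinForm)

section Lattice

variable {R K V : Type*} [CommRing R] [Field K] [Algebra R K] [AddCommGroup V]
  [Module R V] [Module K V] [IsScalarTower R K V]

lemma isLattice_span_range_basis {ι : Type*} [Finite ι] (b : Module.Basis ι K V) :
    (Submodule.span R (Set.range b)).IsLattice K where
  fg := Submodule.fg_span (Set.finite_range b)
  span_eq_top := by rw [Submodule.span_span_of_tower, b.span_eq]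

lemma antitone_dualSubmodule (B : BilinForm K V) :
    Antitone (B.dualSubmodule : Submodule R V → Submodule R V) :=
  fun _ _ hXY _ hx y hy ↦ hx y (hXY hy)

lemma le_dualSubmodule_of_selfDual {B : BilinForm K V} {Λ D : Submodule R V}
    (hΛ : B.dualSubmodule Λ = Λ) (hDΛ : D ≤ Λ) : Λ ≤ B.dualSubmodule D :=
  hΛ.ge.trans (antitone_dualSubmodule B hDΛ)

lemma isLattice_of_le_of_le [IsNoetherianRing R] {X Y Z : Submodule R V} [X.IsLattice K]
    [Z.IsLattice K] (hXY : X ≤ Y) (hYZ : Y ≤ Z) : Y.IsLattice K := by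
  have : IsNoetherian R Y := isNoetherian_of_le hYZ
  exact .of_le_of_isLattice_of_fg K hXY (Module.Finite.iff_fg.1 inferInstance)

lemma isLattice_smul [FaithfulSMul R K] {a : R} (ha : a ≠ 0) (X : Submodule R V) [X.IsLattice K] :
    (a • X).IsLattice K := by
  have ha' : algebraMap R K a ≠ 0 := by simpa using ha
  have hX : Units.mk0 _ ha' • X = a • X := by
    ext x
    simp [Submodule.mem_smul_pointwise_iff_exists]
  exact hX ▸ inferInstance

variable [IsFractionRing R K] [IsDomain R] [IsPrincipalIdealRing R]

lemma exists_basis_span_eq (X : Submodule R V) [X.IsLattice K] :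
    ∃ (n : ℕ) (b : Module.Basis (Fin n) K V), Submodule.span R (Set.range b) = X := by
  have : Module.Free R X := Submodule.IsLattice.free K X
  let b := Module.finBasis R X
  refine ⟨_, b.extendOfIsLattice K, ?_⟩
  have hrange : Set.range (b.extendOfIsLattice K) = X.subtype '' Set.range b := by
    rw [← Set.range_comp]
    exact congrArg Set.range (funext (b.extendOfIsLattice_apply K))
  rw [hrange, ← Submodule.map_span, b.span_eq, Submodule.map_subtype_top]

lemma colength_smul_self {a : R} (ha : Irreducible a) (X : Submodule R V) [X.IsLattice K] :
    colength (a • X) X = Module.finrank K V := by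
  have : Module.Free R X := Submodule.IsLattice.free K X
  have := PrincipalIdealRing.isMaximal_of_irreducible ha
  have hrank : Module.finrank R X = Module.finrank K V := by
    rw [Module.finrank, Submodule.IsLattice.rank' K X, Module.finrank]
  have hcomap : (a • X).comap X.subtype = Ideal.span {a} • (⊤ : Submodule R X) := by
    rw [Submodule.ideal_span_singleton_smul]
    ext x
    simp [Submodule.mem_smul_pointwise_iff_exists, Subtype.ext_iff]
  rw [colength, hcomap, length_quotient_smul_top, hrank]

variable {B : BilinForm K V}

lemma isLattice_dualSubmodule (hB : B.Nondegenerate) (X : Submodule R V) [X.IsLattice K] :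
    (B.dualSubmodule X).IsLattice K := by
  obtain ⟨n, b, rfl⟩ := exists_basis_span_eq X
  rw [B.dualSubmodule_span_of_basis hB]
  exact isLattice_span_range_basis _

lemma flip_dualSubmodule_dualSubmodule (hB : B.Nondegenerate) (X : Submodule R V)
    [X.IsLattice K] : B.flip.dualSubmodule (B.dualSubmodule X) = X := by
  obtain ⟨n, b, rfl⟩ := exists_basis_span_eq X
  exact B.dualSubmodule_flip_dualSubmodule_of_basis hB b

lemma colength_le_colength_dualSubmodule (hB : B.Nondegenerate) {X Y : Submodule R V}
    [X.IsLattice K] [Y.IsLattice K] (hXY : X ≤ Y) :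
    colength X Y ≤ colength (B.dualSubmodule Y) (B.dualSubmodule X) := by
  refine colength_le_of_strictAntiOn (AntitoneOn.strictAntiOn_of_injOn
    ((antitone_dualSubmodule B).antitoneOn _) fun C hC D hD hCD ↦ ?_) hXY
  have := isLattice_of_le_of_le hC.1 hC.2
  have := isLattice_of_le_of_le hD.1 hD.2
  rw [← flip_dualSubmodule_dualSubmodule hB C, hCD, flip_dualSubmodule_dualSubmodule hB]

lemma colength_dualSubmodule (hB : B.Nondegenerate) {X Y : Submodule R V}
    [X.IsLattice K] [Y.IsLattice K] (hXY : X ≤ Y) :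
    colength (B.dualSubmodule Y) (B.dualSubmodule X) = colength X Y := by
  refine le_antisymm ?_ (colength_le_colength_dualSubmodule hB hXY)
  have := isLattice_dualSubmodule hB X
  have := isLattice_dualSubmodule hB Y
  simpa only [flip_dualSubmodule_dualSubmodule hB] using
    colength_le_colength_dualSubmodule hB.flip (antitone_dualSubmodule B hXY)

/-- The lattices `D` with `πD^∨ ⊂ᵐ D ⊂²ᵏ D^∨`, `πD^∨ ⊂ᵐ T D ⊂²ᵏ D^∨` and
`length ((D + T D) / D) ≤ r`, where `D^∨` is the dual with respect to `B`. The set `ℳ(𝔽)`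
is the case `π = p`, `T = τ`, `m = 2`, `k = r = 1`. -/
structure IsModuliLattice (B : BilinForm K V) (T : Submodule R V → Submodule R V) (π : R)
    (m k : ℕ) (r : ℕ∞) (D : Submodule R V) : Prop where
  isLattice : D.IsLattice K
  hasColength_smul_dual : HasColength m (π • B.dualSubmodule D) D
  hasColength_dual : HasColength (2 * k) D (B.dualSubmodule D)
  hasColength_smul_dual_apply : HasColength m (π • B.dualSubmodule D) (T D)
  hasColength_apply_dual : HasColength (2 * k) (T D) (B.dualSubmodule D)
  colength_sup_le : colength D (D ⊔ T D) ≤ r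

/-- The submodules `πΛ ≤ U ≤ Λ` for which `U / πΛ` lies in the Deligne–Lusztig variety: it has
length `m + k`, contains its orthogonal complement `πU^∨ / πΛ`, and its intersection with its
`T`-translate has colength at most `r` in it and still contains that complement. -/
structure IsDeligneLusztigSubmodule (B : BilinForm K V) (T : Submodule R V → Submodule R V)
    (π : R) (m k : ℕ) (r : ℕ∞) (Λ U : Submodule R V) : Prop where
  smul_le : π • Λ ≤ U
  le : U ≤ Λ
  colength_smul : colength (π • Λ) U = (m + k : ℕ)
  smul_dual_le : π • B.dualSubmodule U ≤ U
  colength_inf_le : colength (U ⊓ T U) U ≤ r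
  smul_dual_le_inf : π • B.dualSubmodule U ≤ U ⊓ T U

section SelfDual

variable {B : BilinForm K V} {T : Submodule R V ≃o Submodule R V} {π : R} {m k : ℕ} {r : ℕ∞}
  {Λ : Submodule R V}

lemma colength_dualSubmodule_of_selfDual (hB : B.Nondegenerate) [Λ.IsLattice K]
    (hΛ : B.dualSubmodule Λ = Λ) {D : Submodule R V} [D.IsLattice K] (hDΛ : D ≤ Λ) :
    colength Λ (B.dualSubmodule D) = colength D Λ := by
  simpa only [hΛ] using colength_dualSubmodule hB hDΛ

lemma HasColength.dualSubmodule_of_selfDual (hB : B.Nondegenerate) [Λ.IsLattice K]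
    (hΛ : B.dualSubmodule Λ = Λ) {D : Submodule R V} [D.IsLattice K] (hDΛ : HasColength k D Λ) :
    HasColength k Λ (B.dualSubmodule D) :=
  ⟨le_dualSubmodule_of_selfDual hΛ hDΛ.1,
    (colength_dualSubmodule_of_selfDual hB hΛ hDΛ.1).trans hDΛ.2⟩

lemma IsModuliLattice.hasColength_of_le (hB : B.Nondegenerate) [Λ.IsLattice K]
    (hΛ : B.dualSubmodule Λ = Λ) {T : Submodule R V → Submodule R V} {D : Submodule R V}
    (hD : IsModuliLattice B T π m k r D) (hDΛ : D ≤ Λ) : HasColength k D Λ := by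
  have := hD.isLattice
  have h_two_mul : colength D Λ + colength D Λ = (2 * k : ℕ) :=
    calc colength D Λ + colength D Λ
      _ = colength D Λ + colength Λ (B.dualSubmodule D) := by
        rw [colength_dualSubmodule_of_selfDual hB hΛ hDΛ]
      _ = colength D (B.dualSubmodule D) :=
        colength_add_colength hDΛ (le_dualSubmodule_of_selfDual hΛ hDΛ)
      _ = (2 * k : ℕ) := hD.hasColength_dual.2
  refine ⟨hDΛ, ?_⟩
  generalize colength D Λ = d at h_two_mul ⊢
  cases d <;> norm_cast at h_two_mul ⊢
  lia

lemma IsModuliLattice.isDeligneLusztigSubmodule (hB : B.Nondegenerate) [Λ.IsLattice K]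
    (hΛ : B.dualSubmodule Λ = Λ) (hπ : π ≠ 0) {T : Submodule R V → Submodule R V}
    {D : Submodule R V} (hD : IsModuliLattice B T π m k r D) (hDΛ : D ≤ Λ) :
    IsDeligneLusztigSubmodule B T π m k r Λ D := by
  have := hD.isLattice
  have : Module.IsTorsionFree R V := .trans_faithfulSMul R K V
  have hΛD := (hD.hasColength_of_le hB hΛ hDΛ).dualSubmodule_of_selfDual hB hΛ
  have hπΛD : HasColength (k + m) (π • Λ) D := (hΛD.smul hπ).trans hD.hasColength_smul_dual
  exact
    { smul_le := hπΛD.1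
      le := hDΛ
      colength_smul := by rw [hπΛD.2, add_comm]
      smul_dual_le := hD.hasColength_smul_dual.1
      colength_inf_le := by
        rw [← hD.hasColength_smul_dual.colength_sup_eq_colength_inf hD.hasColength_smul_dual_apply]
        exact hD.colength_sup_le
      smul_dual_le_inf := le_inf hD.hasColength_smul_dual.1 hD.hasColength_smul_dual_apply.1 }

lemma hasColength_smul_dualSubmodule_of_selfDual (hB : B.Nondegenerate) [Λ.IsLattice K]
    (hΛ : B.dualSubmodule Λ = Λ) (hπ : Irreducible π) (hV : Module.finrank K V = m + 2 * k)
    {X Y : Submodule R V} [Y.IsLattice K] (hX : HasColength k X Λ) (hY : HasColength k Y Λ)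
    (hle : π • B.dualSubmodule Y ≤ X) :
    HasColength m (π • B.dualSubmodule Y) X ∧ HasColength (2 * k) X (B.dualSubmodule Y) := by
  have := isLattice_dualSubmodule hB Y
  have h_smul_self : HasColength (m + 2 * k) (π • B.dualSubmodule Y) (B.dualSubmodule Y) :=
    ⟨Submodule.smul_le_self_of_tower _ _, by rw [colength_smul_self hπ, hV]⟩
  have hXY : HasColength (2 * k) X (B.dualSubmodule Y) :=
    two_mul k ▸ hX.trans (hY.dualSubmodule_of_selfDual hB hΛ)
  exact ⟨h_smul_self.of_trans_left hXY hle, hXY⟩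

lemma IsDeligneLusztigSubmodule.hasColength {T : Submodule R V → Submodule R V} [Λ.IsLattice K]
    (hπ : Irreducible π) (hV : Module.finrank K V = m + 2 * k) {U : Submodule R V}
    (hU : IsDeligneLusztigSubmodule B T π m k r Λ U) : HasColength k U Λ := by
  have hΛ : HasColength (m + k + k) (π • Λ) Λ :=
    ⟨Submodule.smul_le_self_of_tower _ _, by rw [colength_smul_self hπ, hV, two_mul, add_assoc]⟩
  exact hΛ.of_trans_right ⟨hU.smul_le, hU.colength_smul⟩ hU.le

lemma IsDeligneLusztigSubmodule.isModuliLattice (hB : B.Nondegenerate) [Λ.IsLattice K]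
    (hΛ : B.dualSubmodule Λ = Λ) (hTΛ : T Λ = Λ) (hπ : Irreducible π)
    (hV : Module.finrank K V = m + 2 * k) {U : Submodule R V}
    (hU : IsDeligneLusztigSubmodule B T π m k r Λ U) : IsModuliLattice B T π m k r U := by
  have := isLattice_smul hπ.ne_zero Λ
  have hU_lattice := isLattice_of_le_of_le hU.smul_le hU.le
  have hUΛ := hU.hasColength hπ hV
  have hTUΛ : HasColength k (T U) Λ := hTΛ ▸ hUΛ.orderIso T
  obtain ⟨hlower, hupper⟩ :=
    hasColength_smul_dualSubmodule_of_selfDual hB hΛ hπ hV hUΛ hUΛ hU.smul_dual_le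
  obtain ⟨hlower', hupper'⟩ := hasColength_smul_dualSubmodule_of_selfDual hB hΛ hπ hV hTUΛ hUΛ
    (hU.smul_dual_le_inf.trans inf_le_right)
  exact ⟨hU_lattice, hlower, hupper, hlower', hupper',
    (hlower.colength_sup_eq_colength_inf hlower').trans_le hU.colength_inf_le⟩

theorem stratum_type0_as_DL_variety_general (hB : B.Nondegenerate) [Λ.IsLattice K]
    (hΛ : B.dualSubmodule Λ = Λ) (hTΛ : T Λ = Λ) (hπ : Irreducible π)
    (hV : Module.finrank K V = m + 2 * k) :
    (∀ D, IsModuliLattice B T π m k r D → D ≤ Λ → HasColength k D Λ) ∧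
      {D | IsModuliLattice B T π m k r D ∧ D ≤ Λ} =
        {U | IsDeligneLusztigSubmodule B T π m k r Λ U} :=
  ⟨fun _ hD hDΛ ↦ hD.hasColength_of_le hB hΛ hDΛ, Set.ext fun _ ↦
    ⟨fun ⟨hD, hDΛ⟩ ↦ hD.isDeligneLusztigSubmodule hB hΛ hπ.ne_zero hDΛ,
      fun hU ↦ ⟨hU.isModuliLattice hB hΛ hTΛ hπ hV, hU.le⟩⟩⟩

end SelfDual

end Lattice

section WittVector

variable {p : ℕ} [Fact p.Prime] {𝔽 : Type} [Field 𝔽]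

lemma isLattice_iff (D : Submodule (Wp p 𝔽) (N0 p 𝔽)) :
    IsLattice p 𝔽 D ↔ D.IsLattice (Kp p 𝔽) :=
  ⟨fun h ↦ ⟨h.1, h.2⟩, fun h ↦ ⟨h.1, h.2⟩⟩

lemma relLength_eq_colength (A B : Submodule (Wp p 𝔽) (N0 p 𝔽)) :
    relLength p 𝔽 A B = colength A B :=
  (Module.coe_length _ _).symm

lemma subD_iff_hasColength (n : ℕ) (A B : Submodule (Wp p 𝔽) (N0 p 𝔽)) :
    SubD p 𝔽 n A B ↔ HasColength n A B :=
  and_congr_right' (by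
    rw [relLength_eq_colength]
    exact WithBot.coe_inj (b := (n : ℕ∞)))

variable (p 𝔽) in
/-- The symplectic form on `N₀` as a bilinear form. -/
def symplecticForm : BilinForm (Kp p 𝔽) (N0 p 𝔽) :=
  LinearMap.mk₂ (Kp p 𝔽) (omegaForm p 𝔽)
    (fun x y z ↦ by simp only [omegaForm, Pi.add_apply]; ring)
    (fun c x y ↦ by simp only [omegaForm, Pi.smul_apply, smul_eq_mul]; ring)
    (fun x y z ↦ by simp only [omegaForm, Pi.add_apply]; ring)
    (fun c x y ↦ by simp only [omegaForm, Pi.smul_apply, smul_eq_mul]; ring)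

lemma symplecticForm_apply (x y : N0 p 𝔽) : symplecticForm p 𝔽 x y = omegaForm p 𝔽 x y := rfl

variable [CharP 𝔽 p]

lemma nondegenerate_symplecticForm : (symplecticForm p 𝔽).Nondegenerate := by
  refine LinearMap.BilinForm.Nondegenerate.ofSeparatingLeft fun x hx ↦ ?_
  have h₀ : x 0 = 0 := by simpa [symplecticForm_apply, omegaForm] using hx (Pi.single 3 1)
  have h₁ : x 1 = 0 := by simpa [symplecticForm_apply, omegaForm] using hx (Pi.single 2 1)
  have h₂ : x 2 = 0 := by simpa [symplecticForm_apply, omegaForm] using hx (Pi.single 1 1)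
  have h₃ : x 3 = 0 := by simpa [symplecticForm_apply, omegaForm] using hx (Pi.single 0 1)
  funext i
  fin_cases i <;> assumption

lemma dualL_eq_dualSubmodule (D : Submodule (Wp p 𝔽) (N0 p 𝔽)) :
    dualL p 𝔽 D = (symplecticForm p 𝔽).dualSubmodule D := by
  ext x
  simp only [LinearMap.BilinForm.mem_dualSubmodule, Submodule.mem_one]
  rfl

variable {σ : Kp p 𝔽 ≃+* Kp p 𝔽}

lemma memM_iff_isModuliLattice (D : Submodule (Wp p 𝔽) (N0 p 𝔽)) :
    memM p 𝔽 σ D ↔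
      IsModuliLattice (symplecticForm p 𝔽) (tauL p 𝔽 σ) (p : Wp p 𝔽) 2 1 1 D := by
  simp only [memM, isLattice_iff, subD_iff_hasColength, dualL_eq_dualSubmodule]
  rw [relLength_eq_colength, WithBot.coe_le_one]
  constructor <;> exact fun ⟨h₁, h₂, h₃, h₄, h₅, h₆⟩ ↦ ⟨h₁, h₂, h₃, h₄, h₅, h₆⟩

lemma isDeligneLusztigSubmodule_iff (Λ U : Submodule (Wp p 𝔽) (N0 p 𝔽)) :
    IsDeligneLusztigSubmodule (symplecticForm p 𝔽) (tauL p 𝔽 σ) (p : Wp p 𝔽) 2 1 1 Λ U ↔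
      (p : Wp p 𝔽) • Λ ≤ U ∧ U ≤ Λ ∧
        relLength p 𝔽 ((p : Wp p 𝔽) • Λ) U = (3 : WithBot ℕ∞) ∧
        (p : Wp p 𝔽) • dualL p 𝔽 U ≤ U ∧
        relLength p 𝔽 (U ⊓ tauL p 𝔽 σ U) U ≤ 1 ∧
        (p : Wp p 𝔽) • dualL p 𝔽 U ≤ U ⊓ tauL p 𝔽 σ U := by
  rw [relLength_eq_colength, relLength_eq_colength, WithBot.coe_le_one, dualL_eq_dualSubmodule]
  have h_three (d : ℕ∞) : (d : WithBot ℕ∞) = 3 ↔ d = 3 := WithBot.coe_inj (b := 3)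
  rw [h_three]
  constructor <;> exact fun ⟨h₁, h₂, h₃, h₄, h₅, h₆⟩ ↦ ⟨h₁, h₂, h₃, h₄, h₅, h₆⟩

variable [IsAlgClosed 𝔽]

/-- The map induced by `τ` on the `W`-submodules of `N₀`, as an order automorphism. -/
def tauOrderIso (hσ : IsWittFrobenius p 𝔽 σ) :
    Submodule (Wp p 𝔽) (N0 p 𝔽) ≃o Submodule (Wp p 𝔽) (N0 p 𝔽) :=
  let τ : N0 p 𝔽 →ₛₗ[(WittVector.frobeniusEquiv p 𝔽 : Wp p 𝔽 →+* Wp p 𝔽)] N0 p 𝔽 :=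
    { toFun := tauFun p 𝔽 σ
      map_add' := fun x y ↦ funext fun i ↦ map_add σ (x i) (y i)
      map_smul' := fun c x ↦ funext fun i ↦ by
        simp only [tauFun, Pi.smul_apply, Algebra.smul_def, map_mul, hσ c,
          RingEquiv.coe_toRingHom] }
  Submodule.orderIsoMapComapOfBijective τ (Function.Bijective.piMap fun _ ↦ σ.bijective)

lemma tauOrderIso_apply (hσ : IsWittFrobenius p 𝔽 σ) (D : Submodule (Wp p 𝔽) (N0 p 𝔽)) :
    tauOrderIso hσ D = tauL p 𝔽 σ D :=
  (Submodule.span_eq (tauOrderIso hσ D)).symm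

end WittVector

/-- Let `Λ` be a `τ`-stable lattice with `Λ = Λ^∨`. Every `D ∈ ℳ(𝔽)`
with `D ⊆ Λ` satisfies `D ⊂¹ Λ`, and `D ↦ D/pΛ` is a bijection from
`{D ∈ ℳ(𝔽) : D ⊆ Λ}` onto the set of `𝔽`-subspaces `U ⊆ V(Λ) = Λ/pΛ` with
`dim U = 3`, `U^⊥ ⊆ U`, `dim U/(U ∩ σ̄U) ≤ 1` and `U^⊥ ⊆ U ∩ σ̄U`.

Here subspaces of `V(Λ)` are encoded by their preimages, i.e. by `W`-submodules `U`
with `pΛ ⊆ U ⊆ Λ`; `dim` becomes the `W`-length relative to `pΛ`, the orthogonal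
complement `U^⊥ ⊆ V(Λ)` is induced by `p·(U^∨)`, and `σ̄U` is induced by `τU`.
Under this encoding `D ↦ D/pΛ` corresponds to `D ↦ D`, so bijectivity becomes an
equality of sets of submodules. -/
theorem stratum_type0_as_DL_variety
    (p : ℕ) [Fact p.Prime] (hp : Odd p)
    (𝔽 : Type) [Field 𝔽] [IsAlgClosed 𝔽] [CharP 𝔽 p]
    (σ : Kp p 𝔽 ≃+* Kp p 𝔽) (hσ : IsWittFrobenius p 𝔽 σ)
    (Λ : Submodule (Wp p 𝔽) (N0 p 𝔽)) (hΛ : IsLattice p 𝔽 Λ)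
    (hτΛ : tauL p 𝔽 σ Λ = Λ) (hself : Λ = dualL p 𝔽 Λ) :
    (∀ D : Submodule (Wp p 𝔽) (N0 p 𝔽), memM p 𝔽 σ D → D ≤ Λ → SubD p 𝔽 1 D Λ) ∧
    {D : Submodule (Wp p 𝔽) (N0 p 𝔽) | memM p 𝔽 σ D ∧ D ≤ Λ} =
      {U : Submodule (Wp p 𝔽) (N0 p 𝔽) |
        (p : Wp p 𝔽) • Λ ≤ U ∧ U ≤ Λ ∧
        relLength p 𝔽 ((p : Wp p 𝔽) • Λ) U = (3 : WithBot ℕ∞) ∧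
        (p : Wp p 𝔽) • dualL p 𝔽 U ≤ U ∧
        relLength p 𝔽 (U ⊓ tauL p 𝔽 σ U) U ≤ 1 ∧
        (p : Wp p 𝔽) • dualL p 𝔽 U ≤ U ⊓ tauL p 𝔽 σ U} := by
  rw [isLattice_iff] at hΛ
  have hT : ⇑(tauOrderIso hσ) = tauL p 𝔽 σ := funext (tauOrderIso_apply hσ)
  simpa only [hT, ← memM_iff_isModuliLattice, ← subD_iff_hasColength,
    isDeligneLusztigSubmodule_iff] using
    stratum_type0_as_DL_variety_general (T := tauOrderIso hσ) (m := 2) (k := 1) (r := 1)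
      nondegenerate_symplecticForm (hself.trans (dualL_eq_dualSubmodule Λ)).symm
      ((tauOrderIso_apply hσ Λ).trans hτΛ) (WittVector.irreducible p) (by simp)

end
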